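/- Let 1<p<∞ and let Ω ⊆ ℝ^N be an open set such that E_p(Ω) < +∞. Then λ_{1,p}(Ω) > 0 if and only if E_p(Ω) > 0. -/

import Mathlib

open MeasureTheory Filter Topology Metric Set ENNReal
open scoped RealInnerProductSpace

noncomputable section

/-- Euclidean space `ℝ^N`. -/
abbrev EucN (N : ℕ) := EuclideanSpace ℝ (Fin N)

/-- A test function on an open set `Ω ⊆ ℝ^N`: smooth, with compact support contained in `Ω`. -/
def IsTestFun {N : ℕ} (Ω : Set (EucN N)) (φ : EucN N → ℝ) : Prop :=
  ContDiff ℝ (⊤ : ℕ∞) φ ∧ HasCompactSupport φ ∧ tsupport φ ⊆ Ω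

/-- Pairs `(u, g)` in `L^q × L^q`, thought of as a function together with its (weak) gradient. -/
abbrev SobPair (N : ℕ) (q : ℝ≥0∞) :=
  Lp ℝ q (volume : Measure (EucN N)) × Lp (EucN N) q (volume : Measure (EucN N))

/-- A pair given (a.e.) by a test function and its gradient. -/
def IsTestPair {N : ℕ} (q : ℝ≥0∞) (Ω : Set (EucN N)) (w : SobPair N q) : Prop :=
  ∃ ψ : EucN N → ℝ, IsTestFun Ω ψ ∧ (⇑w.1 =ᵐ[volume] ψ) ∧
    (⇑w.2 =ᵐ[volume] fun x => gradient ψ x)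

theorem fact_one_le_ofReal {p : ℝ} (hp : 1 ≤ p) : Fact (1 ≤ ENNReal.ofReal p) :=
  ⟨ENNReal.one_le_ofReal.mpr hp⟩

/-- The Sobolev space `W^{1,p}_0(Ω)`, realized as the closure in `L^p × L^p` of the set of
pairs (test function, its gradient). -/
def W10 (N : ℕ) (p : ℝ) (hp : 1 ≤ p) (Ω : Set (EucN N)) :
    Set (SobPair N (ENNReal.ofReal p)) :=
  letI := fact_one_le_ofReal hp
  closure {w | IsTestPair (ENNReal.ofReal p) Ω w}

/-- The first eigenvalue `λ_{1,p}(Ω)` (as an extended real, `∞` if there are no admissible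
functions). -/
def lambda1p (N : ℕ) (p : ℝ) (hp : 1 ≤ p) (Ω : Set (EucN N)) : ℝ≥0∞ :=
  sInf {t | ∃ w ∈ W10 N p hp Ω, (∫ x, |w.1 x| ^ p) = 1 ∧
    t = ENNReal.ofReal (∫ x, ‖w.2 x‖ ^ p)}

/-- The `L^p` Poincaré constant "at infinity" `E_p(Ω)`. -/
def Einfty (N : ℕ) (p : ℝ) (hp : 1 ≤ p) (Ω : Set (EucN N)) : ℝ≥0∞ :=
  ⨆ R ∈ Set.Ioi (0 : ℝ), lambda1p N p hp (Ω \ closure (ball (0 : EucN N) R))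

/-- There is a continuous odd map from `A` to the unit sphere `S^{j-1} ⊆ ℝ^j`. -/
def HasOddMapToSphere {Z : Type*} [NormedAddCommGroup Z] (A : Set Z) (j : ℕ) : Prop :=
  ∃ f : Z → EuclideanSpace ℝ (Fin j),
    ContinuousOn f A ∧ (∀ x ∈ A, ‖f x‖ = 1) ∧ ∀ x ∈ A, f (-x) = -f x

/-- The Krasnosel'skii genus of `A` is at least `k`. -/
def genusGE {Z : Type*} [NormedAddCommGroup Z] (A : Set Z) (k : ℕ) : Prop :=
  ∀ j : ℕ, HasOddMapToSphere A j → k ≤ j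

/-- The Krasnosel'skii genus of `A`, valued in `ℕ∞`. -/
def genus {Z : Type*} [NormedAddCommGroup Z] (A : Set Z) : ℕ∞ :=
  sInf {k : ℕ∞ | ∃ j : ℕ, (j : ℕ∞) = k ∧ HasOddMapToSphere A j}

/-- The class `𝒲_{k,p}(Ω)` of compact symmetric subsets of `S_p(Ω) ∩ W^{1,p}_0(Ω)` with
genus at least `k`. -/
def SobClass (N : ℕ) (p : ℝ) (hp : 1 ≤ p) (Ω : Set (EucN N)) (k : ℕ) :
    Set (Set (SobPair N (ENNReal.ofReal p))) :=
  letI := fact_one_le_ofReal hp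
  {K | K ⊆ W10 N p hp Ω ∧ (∀ w ∈ K, (∫ x, |w.1 x| ^ p) = 1) ∧
       (∀ w ∈ K, -w ∈ K) ∧ IsCompact K ∧ genusGE K k}

/-- The `k`-th minmax Ljusternik–Schnirelmann value `λ_{k,p}^{LS}(Ω)`. -/
def lambdaLS (N : ℕ) (p : ℝ) (hp : 1 ≤ p) (Ω : Set (EucN N)) (k : ℕ) : ℝ≥0∞ :=
  ⨅ K ∈ SobClass N p hp Ω k, ⨆ w ∈ K, ENNReal.ofReal (∫ x, ‖w.2 x‖ ^ p)

/-- `w = (u, ∇u)` is an eigenfunction of the Dirichlet `p`-Laplacian on `Ω` associated to the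
eigenvalue `lam`. -/
def IsEigenfunction (N : ℕ) (p : ℝ) (hp : 1 ≤ p) (Ω : Set (EucN N)) (lam : ℝ)
    (w : SobPair N (ENNReal.ofReal p)) : Prop :=
  w ∈ W10 N p hp Ω ∧ w ≠ 0 ∧
  ∀ φ : EucN N → ℝ, IsTestFun Ω φ →
    (∫ x, ‖w.2 x‖ ^ (p - 2) * ⟪w.2 x, gradient φ x⟫) =
      lam * ∫ x, |w.1 x| ^ (p - 2) * (w.1 x) * φ x

/-- `lam` is an eigenvalue of the Dirichlet `p`-Laplacian on `Ω`. -/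
def IsEigenvalue (N : ℕ) (p : ℝ) (hp : 1 ≤ p) (Ω : Set (EucN N)) (lam : ℝ) : Prop :=
  ∃ w, IsEigenfunction N p hp Ω lam w

/-- `v = (v, ∇v)` is a non-negative weak subsolution of `-Δ_p u = lam · u^{p-1}` in `Ω`. -/
def IsSubsolution (N : ℕ) (p : ℝ) (hp : 1 ≤ p) (Ω : Set (EucN N)) (lam : ℝ)
    (v : SobPair N (ENNReal.ofReal p)) : Prop :=
  v ∈ W10 N p hp Ω ∧ (∀ᵐ x, 0 ≤ v.1 x) ∧
  ∀ φ ∈ W10 N p hp Ω, (∀ᵐ x, 0 ≤ φ.1 x) →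
    (∫ x, ‖v.2 x‖ ^ (p - 2) * ⟪v.2 x, φ.2 x⟫) ≤ lam * ∫ x, (v.1 x) ^ (p - 1) * φ.1 x

/-- A strongly confining potential. -/
def StronglyConfining (N : ℕ) (V : EucN N → ℝ) : Prop :=
  LocallyIntegrable V volume ∧ (∀ᵐ x, 0 ≤ V x) ∧
  ∃ α : ℝ → ℝ, (∀ R > (0 : ℝ), 0 < α R) ∧ MonotoneOn α (Set.Ioi 0) ∧
    Tendsto α atTop atTop ∧
    ∀ R > (0 : ℝ), ∀ᵐ x, x ∉ ball (0 : EucN N) R → α R ≤ V x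

/-- Triples `(u, g, h)` in `L^q × L^q × L^q`; `h` plays the role of `V^{1/p} u` in the weighted
Sobolev space. -/
abbrev SobTriple (N : ℕ) (q : ℝ≥0∞) :=
  Lp ℝ q (volume : Measure (EucN N)) × Lp (EucN N) q (volume : Measure (EucN N)) ×
    Lp ℝ q (volume : Measure (EucN N))

/-- A triple given (a.e.) by a test function, its gradient, and `V^{1/p}` times it. -/
def IsTestTriple {N : ℕ} (q : ℝ≥0∞) (p : ℝ) (Ω : Set (EucN N)) (V : EucN N → ℝ)
    (w : SobTriple N q) : Prop :=
  ∃ ψ : EucN N → ℝ, IsTestFun Ω ψ ∧ (⇑w.1 =ᵐ[volume] ψ) ∧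
    (⇑w.2.1 =ᵐ[volume] fun x => gradient ψ x) ∧
    (⇑w.2.2 =ᵐ[volume] fun x => (V x) ^ (1/p) * ψ x)

/-- The weighted Sobolev space `W^{1,p}_0(Ω; V)`, realized as a closure of triples coming from
test functions; the norm topology of `L^p × L^p × L^p` on such triples corresponds exactly to
the weighted Sobolev norm `(∫|∇u|^p + ∫(1+V)|u|^p)^{1/p}`. -/
def W10V (N : ℕ) (p : ℝ) (hp : 1 ≤ p) (Ω : Set (EucN N)) (V : EucN N → ℝ) :
    Set (SobTriple N (ENNReal.ofReal p)) :=
  letI := fact_one_le_ofReal hp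
  closure {w | IsTestTriple (ENNReal.ofReal p) p Ω V w}

/-- The class `𝒲_{k,p}(Ω; V)` for the weighted space. -/
def SobClassV (N : ℕ) (p : ℝ) (hp : 1 ≤ p) (Ω : Set (EucN N)) (V : EucN N → ℝ) (k : ℕ) :
    Set (Set (SobTriple N (ENNReal.ofReal p))) :=
  letI := fact_one_le_ofReal hp
  {K | K ⊆ W10V N p hp Ω V ∧ (∀ w ∈ K, (∫ x, |w.1 x| ^ p) = 1) ∧
       (∀ w ∈ K, -w ∈ K) ∧ IsCompact K ∧ genusGE K k}

/-- The perturbed minmax value `λ_{k,p}^{LS}(Ω; ε V)`, for the functional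
`G(φ) = ∫|∇φ|^p + ε ∫ V |φ|^p`. -/
def lambdaLSV (N : ℕ) (p : ℝ) (hp : 1 ≤ p) (Ω : Set (EucN N)) (V : EucN N → ℝ)
    (ε : ℝ) (k : ℕ) : ℝ≥0∞ :=
  ⨅ K ∈ SobClassV N p hp Ω V k, ⨆ w ∈ K,
    ENNReal.ofReal ((∫ x, ‖w.2.1 x‖ ^ p) + ε * ∫ x, |w.2.2 x| ^ p)

/-- `w` is a constrained critical point, at level `lam`, of the perturbed functional
`G(φ) = ∫|∇φ|^p + ε ∫ V |φ|^p` on the unit sphere of `L^p`. -/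
def IsCriticalV (N : ℕ) (p : ℝ) (hp : 1 ≤ p) (Ω : Set (EucN N)) (V : EucN N → ℝ)
    (ε : ℝ) (lam : ℝ) (w : SobTriple N (ENNReal.ofReal p)) : Prop :=
  w ∈ W10V N p hp Ω V ∧ (∫ x, |w.1 x| ^ p) = 1 ∧
  ∀ φ : EucN N → ℝ, IsTestFun Ω φ →
    (∫ x, ‖w.2.1 x‖ ^ (p - 2) * ⟪w.2.1 x, gradient φ x⟫)
      + ε * ∫ x, V x * |w.1 x| ^ (p - 2) * (w.1 x) * φ x
    = lam * ∫ x, |w.1 x| ^ (p - 2) * (w.1 x) * φ x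

/-- The embedding `W^{1,p}_0(Ω) ↪ L^p(Ω)` is compact: every bounded sequence in `W^{1,p}_0(Ω)`
has a subsequence converging strongly in `L^p`. -/
def CompactSobolevEmbedding (N : ℕ) (p : ℝ) (hp : 1 ≤ p) (Ω : Set (EucN N)) : Prop :=
  ∀ w : ℕ → SobPair N (ENNReal.ofReal p), (∀ n, w n ∈ W10 N p hp Ω) →
    (∃ M : ℝ≥0∞, M ≠ ⊤ ∧ ∀ n, eLpNorm (⇑(w n).1) (ENNReal.ofReal p) volume ≤ M ∧
        eLpNorm (⇑(w n).2) (ENNReal.ofReal p) volume ≤ M) →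
    ∃ σ : ℕ → ℕ, StrictMono σ ∧ ∃ u : EucN N → ℝ, MemLp u (ENNReal.ofReal p) volume ∧
      Tendsto (fun n => eLpNorm (⇑(w (σ n)).1 - u) (ENNReal.ofReal p) volume) atTop (𝓝 0)


lemma aux_norm_rpow {N : ℕ} {E : Type*} [NormedAddCommGroup E] {p : ℝ} (hp : 0 < p)
    (f : Lp E (ENNReal.ofReal p) (volume : Measure (EucN N))) :
    ∫ x, ‖f x‖ ^ p = ‖f‖ ^ p := by
  have hq0 : ENNReal.ofReal p ≠ 0 := by simpa using hp
  rw [Lp.norm_def, (Lp.memLp f).eLpNorm_eq_integral_rpow_norm hq0 ENNReal.ofReal_ne_top,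
    ENNReal.toReal_ofReal hp.le]
  have h0 : 0 ≤ ∫ x, ‖f x‖ ^ p := integral_nonneg fun x => by positivity
  rw [ENNReal.toReal_ofReal (by positivity), ← Real.rpow_mul h0, inv_mul_cancel₀ hp.ne',
    Real.rpow_one]

lemma aux_W10_mono {N : ℕ} {p : ℝ} (hp : 1 ≤ p) {A B : Set (EucN N)} (h : A ⊆ B) :
    W10 N p hp A ⊆ W10 N p hp B := by
  let _ := fact_one_le_ofReal hp
  apply closure_mono
  rintro w ⟨ψ, ⟨h1, h2, h3⟩, h4⟩
  exact ⟨ψ, ⟨h1, h2, h3.trans h⟩, h4⟩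

lemma aux_lambda_anti {N : ℕ} {p : ℝ} (hp : 1 ≤ p) {A B : Set (EucN N)} (h : A ⊆ B) :
    lambda1p N p hp B ≤ lambda1p N p hp A := by
  apply sInf_le_sInf
  rintro t ⟨w, hw, h2⟩
  exact ⟨w, aux_W10_mono hp h hw, h2⟩

lemma aux_memLp {N : ℕ} {E : Type*} [NormedAddCommGroup E] {f : EucN N → E} (q : ℝ≥0∞)
    (hf : Continuous f) (hc : HasCompactSupport f) : MemLp f q volume :=
  hf.memLp_of_hasCompactSupport hc

lemma aux_grad_eq {N : ℕ} (ψ : EucN N → ℝ) (q : ℝ≥0∞) :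
    eLpNorm (fun x => gradient ψ x) q volume = eLpNorm (fderiv ℝ ψ) q volume := by
  apply eLpNorm_congr_norm_ae
  filter_upwards with x
  simp [gradient]

lemma aux_grad_cont {N : ℕ} {ψ : EucN N → ℝ} (h : ContDiff ℝ (⊤ : ℕ∞) ψ) :
    Continuous (fun x => gradient ψ x) := by
  unfold gradient
  exact (LinearIsometryEquiv.continuous _).comp (h.continuous_fderiv (by simp))

lemma aux_grad_supp {N : ℕ} {ψ : EucN N → ℝ} (h : HasCompactSupport ψ) :
    HasCompactSupport (fun x => gradient ψ x) := by
  unfold gradient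
  exact (h.fderiv (𝕜 := ℝ)).comp_left (map_zero _)

/-- A Poincaré inequality for test functions gives positivity. -/
lemma aux_pos_of_ineq {N : ℕ} {p : ℝ} (hp : 1 ≤ p) {A : Set (EucN N)} {C : ℝ} (hC : 0 < C)
    (h : ∀ ψ, IsTestFun A ψ → eLpNorm ψ (ENNReal.ofReal p) volume ≤
      ENNReal.ofReal C * eLpNorm (fderiv ℝ ψ) (ENNReal.ofReal p) volume) :
    0 < lambda1p N p hp A := by
  let _ := fact_one_le_ofReal hp
  have hp0 : 0 < p := by linarith
  have key : ∀ w ∈ W10 N p hp A, ‖w.1‖ ≤ C * ‖w.2‖ := by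
    intro w hw
    have hcl : IsClosed {w : SobPair N (ENNReal.ofReal p) | ‖w.1‖ ≤ C * ‖w.2‖} :=
      isClosed_le (by fun_prop) (by fun_prop)
    refine closure_minimal ?_ hcl hw
    rintro w ⟨ψ, hψ, h1, h2⟩
    have := h ψ hψ
    rw [← aux_grad_eq, ← eLpNorm_congr_ae h1, ← eLpNorm_congr_ae h2] at this
    simp only [mem_ofPred_eq, Lp.norm_def]
    have h3 := ENNReal.toReal_mono (ENNReal.mul_ne_top ENNReal.ofReal_ne_top
      (Lp.eLpNorm_ne_top w.2)) this
    rwa [ENNReal.toReal_mul, ENNReal.toReal_ofReal hC.le] at h3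
  refine lt_of_lt_of_le (b := ENNReal.ofReal (C⁻¹ ^ p)) (by simp; positivity) ?_
  apply le_sInf
  rintro t ⟨w, hw, h1, rfl⟩
  apply ENNReal.ofReal_le_ofReal
  have e1 := aux_norm_rpow hp0 w.1
  simp only [Real.norm_eq_abs] at e1
  rw [h1] at e1
  rw [aux_norm_rpow hp0 w.2]
  have e2 : ‖w.1‖ = 1 := by
    have := congrArg (fun z : ℝ => z ^ p⁻¹) e1
    simp only [Real.one_rpow] at this
    rw [← Real.rpow_mul (norm_nonneg _), mul_inv_cancel₀ hp0.ne', Real.rpow_one] at this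
    exact this.symm
  have e3 := key w hw
  rw [e2] at e3
  apply Real.rpow_le_rpow (by positivity) _ hp0.le
  rw [inv_le_iff_one_le_mul₀ hC]
  linarith

/-- Positivity gives a Poincaré inequality for test functions. -/
lemma aux_ineq_of_pos {N : ℕ} {p : ℝ} (hp : 1 ≤ p) {A : Set (EucN N)}
    (h : 0 < lambda1p N p hp A) : ∃ C : ℝ, 0 < C ∧
    ∀ ψ, IsTestFun A ψ → eLpNorm ψ (ENNReal.ofReal p) volume ≤
      ENNReal.ofReal C * eLpNorm (fderiv ℝ ψ) (ENNReal.ofReal p) volume := by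
  let _ := fact_one_le_ofReal hp
  have hp0 : 0 < p := by linarith
  obtain ⟨c, hc0, hc⟩ : ∃ c : ℝ, 0 < c ∧ ENNReal.ofReal c ≤ lambda1p N p hp A := by
    obtain ⟨c, hc0, hc⟩ := ENNReal.lt_iff_exists_nnreal_btwn.1 h
    exact ⟨c, by simpa using hc0, by simpa using hc.le⟩
  refine ⟨(c ^ p⁻¹)⁻¹, by positivity, ?_⟩
  rintro ψ ⟨h1, h2, h3⟩
  have m1 : MemLp ψ (ENNReal.ofReal p) volume := aux_memLp _ h1.continuous h2
  have m2 : MemLp (fun x => gradient ψ x) (ENNReal.ofReal p) volume :=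
    aux_memLp _ (aux_grad_cont h1) (aux_grad_supp h2)
  rw [← aux_grad_eq]
  set u := m1.toLp ψ with hu
  set g := m2.toLp _ with hg
  have key : c ^ p⁻¹ * ‖u‖ ≤ ‖g‖ := by
    by_cases hz : ‖u‖ = 0
    · rw [hz]; simp
    have hpos : 0 < ‖u‖ := lt_of_le_of_ne (norm_nonneg _) (Ne.symm hz)
    set a : ℝ := ‖u‖⁻¹ with ha
    have ha0 : 0 < a := by positivity
    have hw : ((a • u, a • g) : SobPair N (ENNReal.ofReal p)) ∈ W10 N p hp A := by
      apply subset_closure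
      refine ⟨a • ψ, ⟨contDiff_const.smul h1, h2.smul_left (f := fun _ => a), ?_⟩, ?_, ?_⟩
      · exact (tsupport_smul_subset_right (fun _ => a) ψ).trans h3
      · filter_upwards [Lp.coeFn_smul a u, m1.coeFn_toLp] with x e1 e2
        rw [e1, Pi.smul_apply, hu, e2, Pi.smul_apply]
      · filter_upwards [Lp.coeFn_smul a g, m2.coeFn_toLp] with x e1 e2
        rw [e1, Pi.smul_apply, hg, e2]
        unfold gradient
        rw [fderiv_const_smul (h1.differentiable (by simp) x)]
        simp
    have hle : lambda1p N p hp A ≤ ENNReal.ofReal (∫ x, ‖(a • g : Lp _ _ _) x‖ ^ p) := by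
      apply sInf_le
      refine ⟨_, hw, ?_, rfl⟩
      have := aux_norm_rpow hp0 (a • u)
      simp only [Real.norm_eq_abs] at this
      rw [this, norm_smul, Real.norm_of_nonneg ha0.le, ha, inv_mul_cancel₀ hz, Real.one_rpow]
    have h5 := hc.trans hle
    rw [aux_norm_rpow hp0, ENNReal.ofReal_le_ofReal_iff (by positivity)] at h5
    have h6 := Real.rpow_le_rpow hc0.le h5 (inv_nonneg.2 hp0.le)
    rw [← Real.rpow_mul (norm_nonneg _), mul_inv_cancel₀ hp0.ne', Real.rpow_one, norm_smul,
      Real.norm_of_nonneg ha0.le, ha] at h6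
    calc c ^ p⁻¹ * ‖u‖ ≤ (‖u‖⁻¹ * ‖g‖) * ‖u‖ := by gcongr
      _ = ‖g‖ := by field_simp
  have k2 : ‖u‖ ≤ (c ^ p⁻¹)⁻¹ * ‖g‖ := by
    rw [inv_mul_eq_div, le_div_iff₀ (by positivity)]
    linarith
  rw [hu, hg, Lp.norm_toLp, Lp.norm_toLp] at k2
  rw [← ENNReal.ofReal_toReal m1.2.ne, ← ENNReal.ofReal_toReal m2.2.ne,
    ← ENNReal.ofReal_mul (by positivity)]
  exact ENNReal.ofReal_le_ofReal k2

/-- Translation estimate. -/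
lemma aux_translate {N : ℕ} {p : ℝ} (hp : 1 ≤ p) {ψ : EucN N → ℝ}
    (h1 : ContDiff ℝ (⊤ : ℕ∞) ψ) (h : EucN N) :
    eLpNorm (fun x => ψ (x + h) - ψ x) (ENNReal.ofReal p) volume ≤
      ENNReal.ofReal ‖h‖ * eLpNorm (fderiv ℝ ψ) (ENNReal.ofReal p) volume := by
  have hp0 : 0 < p := by linarith
  have hq0 : ENNReal.ofReal p ≠ 0 := by simpa using hp0
  have hD : Continuous (fderiv ℝ ψ) := h1.continuous_fderiv (by simp)
  have hpr : IsProbabilityMeasure ((volume : Measure ℝ).restrict (Ioc 0 1)) := ⟨by simp⟩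
  -- pointwise bound
  have pt : ∀ x, ‖ψ (x + h) - ψ x‖ₑ ^ p ≤
      ‖h‖ₑ ^ p * ∫⁻ t in Ioc (0:ℝ) 1, ‖fderiv ℝ ψ (x + t • h)‖ₑ ^ p := by
    intro x
    have hder : ∀ t ∈ uIcc (0:ℝ) 1, HasDerivAt (fun t : ℝ => ψ (x + t • h))
        (fderiv ℝ ψ (x + t • h) h) t := by
      intro t _
      have hd := (h1.differentiable (by simp) (x + t • h)).hasFDerivAt
      have hl : HasDerivAt (fun t : ℝ => x + t • h) h t := by
        simpa using ((hasDerivAt_id t).smul_const h).const_add x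
      exact hd.comp_hasDerivAt t hl
    have hcD : Continuous fun t : ℝ => fderiv ℝ ψ (x + t • h) := by fun_prop
    have hcc : Continuous fun t : ℝ => fderiv ℝ ψ (x + t • h) h := by fun_prop
    have ftc := intervalIntegral.integral_eq_sub_of_hasDerivAt hder
      (hcc.intervalIntegrable 0 1)
    simp only [one_smul, zero_smul, add_zero] at ftc
    rw [← ftc, intervalIntegral.integral_of_le zero_le_one]
    have b1 : ‖∫ t in Ioc (0:ℝ) 1, fderiv ℝ ψ (x + t • h) h‖ₑ ≤
        ‖h‖ₑ * ∫⁻ t in Ioc (0:ℝ) 1, ‖fderiv ℝ ψ (x + t • h)‖ₑ := by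
      refine (enorm_integral_le_lintegral_enorm _).trans ?_
      rw [← lintegral_const_mul' _ _ enorm_ne_top]
      apply lintegral_mono
      intro t
      exact (ContinuousLinearMap.le_opENorm _ _).trans_eq (mul_comm _ _)
    have b2 : ∫⁻ t in Ioc (0:ℝ) 1, ‖fderiv ℝ ψ (x + t • h)‖ₑ ≤
        (∫⁻ t in Ioc (0:ℝ) 1, ‖fderiv ℝ ψ (x + t • h)‖ₑ ^ p) ^ (1 / p) := by
      have := eLpNorm_le_eLpNorm_of_exponent_le (ENNReal.one_le_ofReal.2 hp)
        (hcD.aestronglyMeasurable (μ := volume.restrict (Ioc (0:ℝ) 1)))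
      rwa [eLpNorm_one_eq_lintegral_enorm, eLpNorm_eq_lintegral_rpow_enorm_toReal hq0
        ENNReal.ofReal_ne_top, ENNReal.toReal_ofReal hp0.le] at this
    calc _ ≤ (‖h‖ₑ * (∫⁻ t in Ioc (0:ℝ) 1, ‖fderiv ℝ ψ (x + t • h)‖ₑ ^ p) ^ (1 / p)) ^ p := by
          gcongr
          exact b1.trans (by gcongr)
      _ = _ := by
          rw [ENNReal.mul_rpow_of_nonneg _ _ hp0.le, ← ENNReal.rpow_mul, one_div,
            inv_mul_cancel₀ hp0.ne', ENNReal.rpow_one]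
  have meas : Measurable (Function.uncurry fun (x : EucN N) (t : ℝ) =>
      ‖fderiv ℝ ψ (x + t • h)‖ₑ ^ p) := by
    have : Continuous fun z : EucN N × ℝ => fderiv ℝ ψ (z.1 + z.2 • h) := by fun_prop
    exact this.enorm.measurable.pow_const p
  have main : ∫⁻ x, ‖ψ (x + h) - ψ x‖ₑ ^ p ≤ ‖h‖ₑ ^ p * ∫⁻ x, ‖fderiv ℝ ψ x‖ₑ ^ p := by
    refine (lintegral_mono pt).trans ?_
    rw [lintegral_const_mul' _ _ (by finiteness)]
    refine mul_le_mul_right ?_ _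
    rw [lintegral_lintegral_swap meas.aemeasurable]
    have : ∀ t : ℝ, ∫⁻ x, ‖fderiv ℝ ψ (x + t • h)‖ₑ ^ p = ∫⁻ x, ‖fderiv ℝ ψ x‖ₑ ^ p :=
      fun t => lintegral_add_right_eq_self (fun x => ‖fderiv ℝ ψ x‖ₑ ^ p) (t • h)
    simp [this]
  rw [eLpNorm_eq_lintegral_rpow_enorm_toReal hq0 ENNReal.ofReal_ne_top,
    eLpNorm_eq_lintegral_rpow_enorm_toReal hq0 ENNReal.ofReal_ne_top,
    ENNReal.toReal_ofReal hp0.le, ofReal_norm]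
  calc _ ≤ (‖h‖ₑ ^ p * ∫⁻ x, ‖fderiv ℝ ψ x‖ₑ ^ p) ^ (1 / p) := by gcongr
    _ = _ := by
      rw [ENNReal.mul_rpow_of_nonneg _ _ (by positivity), ← ENNReal.rpow_mul, one_div,
            mul_inv_cancel₀ hp0.ne', ENNReal.rpow_one]

/-- Cutoff vanishing near the origin with small gradient. -/
lemma aux_cutoff (N : ℕ) {ε R : ℝ} (hε : 0 < ε) : ∃ K : ℝ, R < K ∧ 0 < K ∧
    ∃ η : EucN N → ℝ, ContDiff ℝ (⊤ : ℕ∞) η ∧ (∀ x, |η x| ≤ 1) ∧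
      (∀ x, ‖x‖ ≤ K → η x = 0) ∧ (∀ x, 2 * K ≤ ‖x‖ → η x = 1) ∧
      ∀ x, ‖fderiv ℝ η x‖ ≤ ε := by
  let χ : ContDiffBump (0 : EucN N) := ⟨1, 2, by norm_num, by norm_num⟩
  have hχ : ContDiff ℝ (⊤ : ℕ∞) (χ : EucN N → ℝ) := χ.contDiff
  obtain ⟨M, hM⟩ := (χ.hasCompactSupport.fderiv (𝕜 := ℝ)).exists_bound_of_continuous
    (hχ.continuous_fderiv (by simp))
  have hM0 : 0 ≤ M := (norm_nonneg _).trans (hM 0)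
  set K : ℝ := max (R + 1) (max 1 (M / ε)) with hK
  have hK0 : 0 < K := lt_of_lt_of_le one_pos ((le_max_left _ _).trans (le_max_right _ _))
  have hKM : M ≤ K * ε := by
    rw [← div_le_iff₀ hε]; exact (le_max_right _ _).trans (le_max_right _ _)
  refine ⟨K, lt_of_lt_of_le (lt_add_one R) (le_max_left _ _), hK0,
    fun x => 1 - χ (K⁻¹ • x), ?_, ?_, ?_, ?_, ?_⟩
  · exact contDiff_const.sub (hχ.comp (contDiff_id.const_smul K⁻¹))
  · intro x
    have := χ.nonneg (x := K⁻¹ • x)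
    have := χ.le_one (x := K⁻¹ • x)
    rw [abs_le]; constructor <;> linarith
  · intro x hx
    have : χ (K⁻¹ • x) = 1 := by
      apply χ.one_of_mem_closedBall
      rw [mem_closedBall_zero_iff, norm_smul, Real.norm_of_nonneg (by positivity),
        inv_mul_le_iff₀ hK0]
      simpa [χ] using hx
    simp [this]
  · intro x hx
    have : χ (K⁻¹ • x) = 0 := by
      apply χ.zero_of_le_dist
      rw [dist_zero_right, norm_smul, Real.norm_of_nonneg (by positivity),
        le_inv_mul_iff₀ hK0]
      simp only [χ]; linarith
    simp [this]
  · intro x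
    have hd := (hχ.differentiable (by simp) (K⁻¹ • x)).hasFDerivAt
    have hl : HasFDerivAt (fun x : EucN N => K⁻¹ • x)
        (K⁻¹ • ContinuousLinearMap.id ℝ (EucN N)) x := (hasFDerivAt_id x).const_smul K⁻¹
    have hh := (hd.comp x hl).const_sub 1
    have e : fderiv ℝ (fun x => 1 - χ (K⁻¹ • x)) x = _ := hh.fderiv
    rw [e, norm_neg, ContinuousLinearMap.comp_smul, norm_smul, ContinuousLinearMap.comp_id,
      Real.norm_of_nonneg (by positivity), inv_mul_le_iff₀ hK0]
    exact (hM _).trans hKM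

lemma aux_main {N : ℕ} (hN : N ≠ 0) {p : ℝ} (hp : 1 ≤ p) {Ω : Set (EucN N)} {R C : ℝ}
    (hC : 0 < C)
    (h : ∀ ψ, IsTestFun (Ω \ closure (ball (0 : EucN N) R)) ψ →
      eLpNorm ψ (ENNReal.ofReal p) volume ≤
      ENNReal.ofReal C * eLpNorm (fderiv ℝ ψ) (ENNReal.ofReal p) volume) :
    ∃ C' : ℝ, 0 < C' ∧ ∀ φ, IsTestFun Ω φ → eLpNorm φ (ENNReal.ofReal p) volume ≤
      ENNReal.ofReal C' * eLpNorm (fderiv ℝ φ) (ENNReal.ofReal p) volume := by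
  have hq1 : 1 ≤ ENNReal.ofReal p := ENNReal.one_le_ofReal.2 hp
  obtain ⟨K, hRK, hK0, η, hη, hη1, hη0, hηe, hηd⟩ :=
    aux_cutoff N (ε := 1 / (4 * C)) (R := R) (by positivity)
  let v : EucN N := EuclideanSpace.single ⟨0, Nat.pos_of_ne_zero hN⟩ (4 * K)
  have hv : ‖v‖ = 4 * K := by
    simp only [v, PiLp.norm_single]
    rw [Real.norm_of_nonneg (by positivity)]
  refine ⟨4 * C + 8 * K, by positivity, ?_⟩
  rintro φ ⟨h1, h2, h3⟩
  have hη' : ∀ x, ‖x‖ < K → (fun x => η x * φ x) x = 0 := by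
    intro x hx; simp [hη0 x hx.le]
  have hc : Continuous φ := h1.continuous
  have hcη : Continuous η := hη.continuous
  have hD : Continuous (fderiv ℝ φ) := h1.continuous_fderiv (by simp)
  have htest : IsTestFun (Ω \ closure (ball (0 : EucN N) R)) (fun x => η x * φ x) := by
    refine ⟨hη.mul h1, h2.mul_left (f := η), ?_⟩
    rintro x hx
    refine ⟨h3 (tsupport_mul_subset_right (f := η) hx), ?_⟩
    intro hx2
    have hx3 : ‖x‖ ≤ R := by
      simpa using closure_ball_subset_closedBall hx2
    have hcl : tsupport (fun x => η x * φ x) ⊆ {x | K ≤ ‖x‖} := by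
      apply closure_minimal _ (isClosed_le continuous_const continuous_norm)
      intro y hy
      by_contra hlt
      simp only [mem_ofPred_eq, not_le] at hlt
      exact hy (hη' y hlt)
    have := hcl hx
    simp only [mem_ofPred_eq] at this
    linarith
  have i1 := h _ htest
  -- derivative of the product
  have i2 : eLpNorm (fderiv ℝ fun x => η x * φ x) (ENNReal.ofReal p) volume ≤
      eLpNorm (fderiv ℝ φ) (ENNReal.ofReal p) volume +
      ENNReal.ofReal (1 / (4 * C)) * eLpNorm φ (ENNReal.ofReal p) volume := by
    have e : ∀ x, ‖fderiv ℝ (fun x => η x * φ x) x‖ ≤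
        ‖‖fderiv ℝ φ x‖ + (1 / (4 * C)) * ‖φ x‖‖ := by
      intro x
      rw [fderiv_fun_mul (hη.differentiable (by simp) x) (h1.differentiable (by simp) x)]
      rw [Real.norm_of_nonneg (by positivity)]
      refine (norm_add_le _ _).trans ?_
      rw [norm_smul, norm_smul]
      refine add_le_add ?_ ?_
      · calc _ ≤ 1 * ‖fderiv ℝ φ x‖ := by gcongr; exact hη1 x
          _ = _ := one_mul _
      · rw [mul_comm]; gcongr; exact hηd x
    refine (eLpNorm_mono e).trans ?_
    refine (eLpNorm_add_le hD.norm.aestronglyMeasurable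
      (continuous_const.mul hc.norm).aestronglyMeasurable hq1).trans ?_
    rw [eLpNorm_norm]
    gcongr
    have := eLpNorm_const_smul_le (c := 1 / (4 * C)) (f := fun x => ‖φ x‖)
      (p := ENNReal.ofReal p) (μ := (volume : Measure (EucN N)))
    rw [eLpNorm_norm, Real.enorm_of_nonneg (by positivity)] at this
    exact this
  have hpt : ∀ x, ‖φ x‖ ≤
      ‖‖η x * φ x‖ + (‖φ (x + v) - φ x‖ + ‖η (x + v) * φ (x + v)‖)‖ := by
    intro x
    refine le_trans ?_ (Real.le_norm_self _)
    by_cases hx : 2 * K ≤ ‖x‖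
    · rw [hηe x hx, one_mul]
      have : 0 ≤ ‖φ (x + v) - φ x‖ + ‖η (x + v) * φ (x + v)‖ := by positivity
      linarith
    · have : 2 * K ≤ ‖x + v‖ := by
        have := norm_sub_norm_le v (-x)
        rw [sub_neg_eq_add, norm_neg, hv, add_comm v x] at this
        linarith
      rw [hηe _ this, one_mul]
      have h5 := norm_sub_le (φ (x + v)) (φ (x + v) - φ x)
      rw [_root_.sub_sub_cancel] at h5
      have : 0 ≤ ‖η x * φ x‖ := norm_nonneg _
      linarith
  have i3 : eLpNorm φ (ENNReal.ofReal p) volume ≤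
      2 * eLpNorm (fun x => η x * φ x) (ENNReal.ofReal p) volume +
      ENNReal.ofReal (4 * K) * eLpNorm (fderiv ℝ φ) (ENNReal.ofReal p) volume := by
    refine (eLpNorm_mono hpt).trans ?_
    have c1 : Continuous fun x => ‖η x * φ x‖ := by fun_prop
    have c2 : Continuous fun x => ‖φ (x + v) - φ x‖ := by fun_prop
    have c3 : Continuous fun x => ‖η (x + v) * φ (x + v)‖ := by fun_prop
    have s1 := eLpNorm_add_le (p := ENNReal.ofReal p)
      (c1.aestronglyMeasurable (μ := volume)) (c2.add c3).aestronglyMeasurable hq1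
    have s2 := eLpNorm_add_le (p := ENNReal.ofReal p)
      (c2.aestronglyMeasurable (μ := volume)) c3.aestronglyMeasurable hq1
    rw [eLpNorm_norm] at s1
    rw [eLpNorm_norm, eLpNorm_norm] at s2
    have s3 := aux_translate hp h1 v
    rw [hv] at s3
    have s4 : eLpNorm (fun x => η (x + v) * φ (x + v)) (ENNReal.ofReal p) volume =
        eLpNorm (fun x => η x * φ x) (ENNReal.ofReal p) volume :=
      eLpNorm_comp_measurePreserving (g := fun x => η x * φ x)
        (hcη.mul hc).aestronglyMeasurable (measurePreserving_add_right volume v)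
    rw [s4] at s2
    calc _ ≤ _ := s1
      _ ≤ eLpNorm (fun x => η x * φ x) (ENNReal.ofReal p) volume +
          (ENNReal.ofReal (4 * K) * eLpNorm (fderiv ℝ φ) (ENNReal.ofReal p) volume +
            eLpNorm (fun x => η x * φ x) (ENNReal.ofReal p) volume) := by
          gcongr
          exact s2.trans (by gcongr)
      _ = _ := by ring
  have f1 : eLpNorm φ (ENNReal.ofReal p) volume ≠ ⊤ := (aux_memLp _ hc h2).2.ne
  have f2 : eLpNorm (fderiv ℝ φ) (ENNReal.ofReal p) volume ≠ ⊤ :=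
    (aux_memLp _ hD (h2.fderiv (𝕜 := ℝ))).2.ne
  have f3 : eLpNorm (fun x => η x * φ x) (ENNReal.ofReal p) volume ≠ ⊤ :=
    (aux_memLp _ (hcη.mul hc) (h2.mul_left (f := η))).2.ne
  have i4 := i1.trans (mul_le_mul_right i2 _)
  generalize eLpNorm φ (ENNReal.ofReal p) volume = a at *
  generalize eLpNorm (fderiv ℝ φ) (ENNReal.ofReal p) volume = b at *
  generalize eLpNorm (fun x => η x * φ x) (ENNReal.ofReal p) volume = d at *
  lift a to NNReal using f1
  lift b to NNReal using f2
  lift d to NNReal using f3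
  rw [← ENNReal.ofReal_coe_nnreal, ← ENNReal.ofReal_coe_nnreal (p := b),
    ← ENNReal.ofReal_mul (by positivity), ENNReal.ofReal_le_ofReal_iff (by positivity)]
  have i5 : (d : ℝ) ≤ C * (b + 1 / (4 * C) * a) := by
    have := ENNReal.toReal_mono (by finiteness) i4
    rw [ENNReal.toReal_mul, ENNReal.toReal_add (by finiteness) (by finiteness),
      ENNReal.toReal_mul, ENNReal.toReal_ofReal hC.le,
      ENNReal.toReal_ofReal (by positivity)] at this
    simpa using this
  have i6 : (a : ℝ) ≤ 2 * d + 4 * K * b := by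
    have := ENNReal.toReal_mono (by finiteness) i3
    rw [ENNReal.toReal_add (by finiteness) (by finiteness),
      ENNReal.toReal_mul, ENNReal.toReal_mul, 
      ENNReal.toReal_ofReal (by positivity)] at this
    simpa using this
  have i7 : C * (b + 1 / (4 * C) * a) = C * b + a / 4 := by field_simp
  nlinarith

theorem statement7 (N : ℕ) (p : ℝ) (hp1 : 1 < p) (Ω : Set (EucN N)) (hΩ : IsOpen Ω)
    (hE : Einfty N p hp1.le Ω ≠ ⊤) :
    0 < lambda1p N p hp1.le Ω ↔ 0 < Einfty N p hp1.le Ω := by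
  constructor
  · intro h
    refine h.trans_le ((aux_lambda_anti hp1.le sdiff_subset).trans
      (le_iSup₂_of_le (1 : ℝ) (by simp) le_rfl))
  · intro h
    have hN : N ≠ 0 := by
      rintro rfl
      apply hE
      rw [eq_top_iff]
      refine le_trans ?_ (le_iSup₂_of_le (1 : ℝ) (by simp) le_rfl)
      have he : Ω \ closure (ball (0 : EucN 0) 1) = ∅ := by
        ext x
        have : x = 0 := Subsingleton.elim _ _
        subst this
        simp only [Set.mem_sdiff, mem_empty_iff_false, iff_false, not_and, not_not]
        intro _
        exact subset_closure (mem_ball_self one_pos)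
      rw [he]
      apply le_sInf
      rintro t ⟨w, hw, hw1, -⟩
      exfalso
      let _ := fact_one_le_ofReal hp1.le
      have hz : ‖w.1‖ = 0 := by
        have hcl : IsClosed {w : SobPair 0 (ENNReal.ofReal p) | ‖w.1‖ = 0} :=
          isClosed_eq (by fun_prop) (by fun_prop)
        refine closure_minimal ?_ hcl hw
        rintro w ⟨ψ, ⟨_, _, h3⟩, h4, _⟩
        have : ψ = 0 := tsupport_eq_empty_iff.1 (subset_empty_iff.1 h3)
        subst this
        simp only [mem_ofPred_eq, Lp.norm_def]
        rw [eLpNorm_congr_ae h4]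
        simp
      have := aux_norm_rpow (by linarith : 0 < p) w.1
      simp only [Real.norm_eq_abs] at this
      rw [hw1, hz, Real.zero_rpow (by linarith)] at this
      norm_num at this
    obtain ⟨R, hR⟩ := lt_iSup_iff.1 h
    obtain ⟨_, hR⟩ := lt_iSup_iff.1 hR
    obtain ⟨C, hC, hi⟩ := aux_ineq_of_pos hp1.le hR
    obtain ⟨C', hC', hi'⟩ := aux_main hN hp1.le hC hi
    exact aux_pos_of_ineq hp1.le hC' hi'

end
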